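/- Let A = ⊕_{i∈ℤ} A_i be a ℤ-graded ring with A_i = 0 for all i < 0 and with A_0 left artinian, and let J := rad(A_0) ⊕ (⊕_{i≥1} A_i), where rad(A_0) is the Jacobson radical of A_0. Let X be a ℤ-graded left A-module such that X_j = 0 for all sufficiently small j. Then there exist a ℤ-graded left A-module P which is a direct sum of degree-shifted copies of graded modules of the form Ae with e an idempotent of A_0, and a surjective degree-preserving homomorphism f : P → X of graded A-modules, such that ker f ⊆ J·P and (ker f)_j = 0 for all sufficiently small j. -/

import Mathlib

/-!
Statement 2.  Let `A = ⊕_{i∈ℤ} A_i` be a ℤ-graded ring with `A_i = 0` for `i < 0` and `A_0`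
left artinian, and let `J := rad(A_0) ⊕ (⊕_{i≥1} A_i)`.  Every ℤ-graded left `A`-module `X`
with `X_j = 0` for `j ≪ 0` admits a surjective degree-preserving homomorphism `f : P → X` of
graded modules, where `P` is a direct sum of degree-shifted copies of modules `A·e` with `e`
an idempotent of `A_0`, such that `ker f ⊆ J·P` and `(ker f)_j = 0` for `j ≪ 0`.
-/

universe u

open DirectSum

section ProjDim

/-- `pdLE R n M` means `M` admits a projective resolution of length at most `n`
(in the category of all `R`-modules). -/
def pdLE (R : Type u) [Ring R] : ℕ → ∀ (M : Type u) [AddCommGroup M] [Module R M], Prop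
  | 0, M, _, _ => Module.Projective R M
  | n+1, M, _, _ => ∃ (P : Type u) (_ : AddCommGroup P) (_ : Module R P)
      (f : P →ₗ[R] M), Module.Projective R P ∧ Function.Surjective f ∧
      pdLE R n ↥(LinearMap.ker f)

/-- The projective dimension of a module, as an element of `ℕ∞` (`⊤` if no finite
projective resolution exists). -/
noncomputable def projDim (R : Type u) [Ring R] (M : Type u) [AddCommGroup M]
    [Module R M] : ℕ∞ :=
  ⨅ (n : ℕ) (_ : pdLE R n M), (n : ℕ∞)

/-- The (left) global dimension of a ring: the supremum of the projective dimensions of all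
left modules.  (The right global dimension of `A` is `globalDim Aᵐᵒᵖ`.) -/
noncomputable def globalDim (R : Type u) [Ring R] : ℕ∞ :=
  ⨆ (M : ModuleCat.{u} R), projDim R M

end ProjDim

section Graded

variable (A : Type u) [Ring A] (𝒜 : ℤ → AddSubgroup A)

/-- A grading `ℳ` on a left `A`-module `M` compatible with the grading `𝒜` on `A`:
`M = ⊕_j ℳ j` and `𝒜 i • ℳ j ⊆ ℳ (i + j)`. -/
def IsGradedModule (M : Type u) [AddCommGroup M] [Module A M]
    (ℳ : ℤ → AddSubgroup M) : Prop :=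
  DirectSum.IsInternal ℳ ∧
    ∀ (i j : ℤ) (a : A) (m : M), a ∈ 𝒜 i → m ∈ ℳ j → a • m ∈ ℳ (i + j)

/-- A grading on a right `A`-module (= left `Aᵐᵒᵖ`-module): `ℳ j • 𝒜 i ⊆ ℳ (j + i)`. -/
def IsGradedRightModule (M : Type u) [AddCommGroup M] [Module Aᵐᵒᵖ M]
    (ℳ : ℤ → AddSubgroup M) : Prop :=
  DirectSum.IsInternal ℳ ∧
    ∀ (i j : ℤ) (a : A) (m : M), a ∈ 𝒜 i → m ∈ ℳ j → (MulOpposite.op a) • m ∈ ℳ (j + i)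

/-- A submodule `p` is graded (w.r.t. the grading `ℳ`) if it is the (internal direct) sum of
its homogeneous parts `p ∩ ℳ j`. -/
def IsGradedSubmodule {R : Type*} [Ring R] {M : Type u} [AddCommGroup M] [Module R M]
    (ℳ : ℤ → AddSubgroup M) (p : Submodule R M) : Prop :=
  p.toAddSubgroup = ⨆ j : ℤ, (p.toAddSubgroup ⊓ ℳ j)

/-- A graded-simple left `A`-module: a nonzero graded module whose only graded submodules
are `⊥` and `⊤`. -/
def IsGradedSimple (M : Type u) [AddCommGroup M] [Module A M]
    (ℳ : ℤ → AddSubgroup M) : Prop :=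
  IsGradedModule A 𝒜 M ℳ ∧ Nontrivial M ∧
    ∀ p : Submodule A M, IsGradedSubmodule ℳ p → p = ⊥ ∨ p = ⊤

/-- A graded-simple right `A`-module. -/
def IsGradedSimpleRight (M : Type u) [AddCommGroup M] [Module Aᵐᵒᵖ M]
    (ℳ : ℤ → AddSubgroup M) : Prop :=
  IsGradedRightModule A 𝒜 M ℳ ∧ Nontrivial M ∧
    ∀ p : Submodule Aᵐᵒᵖ M, IsGradedSubmodule ℳ p → p = ⊥ ∨ p = ⊤

end Graded

section GradedCover

variable (A : Type u) [Ring A] (𝒜 : ℤ → AddSubgroup A) [GradedRing 𝒜]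

/-- The ideal `J = rad(A₀) ⊕ (⊕_{i ≥ 1} A_i)` of a nonnegatively graded ring, as a set:
the elements whose degree-`0` component lies in the Jacobson radical of `A₀` and whose
negative-degree components vanish. -/
def gradedRadical : Set A :=
  {a : A | (DirectSum.decompose 𝒜 a 0 ∈ Ideal.jacobson (⊥ : Ideal ↥(𝒜 0))) ∧
    ∀ i : ℤ, i < 0 → DirectSum.decompose 𝒜 a i = 0}

variable (ι : Type u) (e : ι → A)

/-- The direct sum `⊕_{k : ι} A·(e k)` of the cyclic left modules generated by
the elements `e k`. -/
abbrev freeIdemModule := ⨁ (k : ι), ↥(Submodule.span A ({e k} : Set A))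

variable (s : ι → ℤ)

/-- The grading on `⊕_k (A e k)(−s k)`: the degree-`j` part consists of those elements whose
`k`-component lies in `𝒜 (j - s k)` (i.e. each summand `A e k` carries the grading induced
from `A`, shifted by `s k`). -/
def freeIdemGrading (j : ℤ) : AddSubgroup (freeIdemModule A ι e) where
  carrier := {x | ∀ k : ι, (x k : A) ∈ 𝒜 (j - s k)}
  add_mem' := by
    intro x y hx hy k
    rw [DirectSum.add_apply]
    exact add_mem (hx k) (hy k)
  zero_mem' := by
    intro k
    rw [DirectSum.zero_apply]
    exact zero_mem _
  neg_mem' := by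
    intro x hx k
    rw [show ((-x) k) = -(x k) from rfl]
    exact neg_mem (hx k)

end GradedCover

theorem exists_idempotent_generator_mod_jacobson {R : Type*} [Ring R] [IsSemiprimaryRing R]
    {Q : Type*} [AddCommGroup Q] [Module R Q]
    (hQ : ∀ r ∈ Ring.jacobson R, ∀ q : Q, r • q = 0) (q : Q) :
    ∃ e : R, IsIdempotentElem e ∧ e • q = q ∧ ∀ r : R, r • q = 0 → r * e ∈ Ring.jacobson R := by
  let π := Ideal.Quotient.mk (Ring.jacobson R)
  have hπ : Function.Surjective π := Ideal.Quotient.mk_surjective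
  let I : Ideal R := LinearMap.ker (LinearMap.toSpanSingleton R Q q)
  obtain ⟨g, hg, hI⟩ := IsSemisimpleRing.ideal_eq_span_idempotent (I.map π)
  obtain ⟨n, hn⟩ := (IsSemiprimaryRing.isNilpotent : IsNilpotent (Ring.jacobson R))
  obtain ⟨e, he, hge⟩ := exists_isIdempotentElem_eq_of_ker_isNilpotent π
    (fun x hx ↦ ⟨n, by
      rw [Ideal.mk_ker] at hx
      have := Ideal.pow_mem_pow hx n
      rwa [hn] at this⟩) (1 - g) (hπ _) hg.one_sub
  refine ⟨e, he, ?_, fun r hr ↦ ?_⟩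
  · have : g ∈ I.map π := hI ▸ Ideal.subset_span rfl
    obtain ⟨i, hi, hig⟩ := (Ideal.mem_map_iff_of_surjective π hπ).1 this
    have h1 : 1 - e - i ∈ Ring.jacobson R := by
      rw [← Ideal.Quotient.eq_zero_iff_mem]
      change π _ = 0
      rw [map_sub, map_sub, map_one, hge, hig]
      abel
    have h2 := hQ _ h1 q
    have h3 : i • q = 0 := hi
    rw [sub_smul, sub_smul, h3, one_smul, sub_zero, sub_eq_zero] at h2
    exact h2.symm
  · have : π r ∈ I.map π := Ideal.mem_map_of_mem _ (show r ∈ I from hr)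
    rw [hI, Ideal.mem_span_singleton'] at this
    obtain ⟨b, hb⟩ := this
    rw [← Ideal.Quotient.eq_zero_iff_mem]
    change π _ = 0
    rw [map_mul, hge, ← hb, mul_assoc, mul_sub, hg.eq, mul_one, sub_self, mul_zero]

theorem isSemisimpleModule_of_jacobson_smul_eq_zero {R : Type*} [Ring R] [IsSemiprimaryRing R]
    {Q : Type*} [AddCommGroup Q] [Module R Q]
    (hQ : ∀ r ∈ Ring.jacobson R, ∀ q : Q, r • q = 0) : IsSemisimpleModule R Q := by
  have h : Module.IsTorsionBySet R Q (Ring.jacobson R) := fun q r ↦ hQ r r.2 q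
  let _ := h.module
  exact (h.semilinearMap.isSemisimpleModule_iff_of_bijective Function.bijective_id).2
      inferInstance

/-- The data of a projective cover of `M ⧸ N` over a semiprimary ring: idempotents `e k` and
elements `m k` fixed by them such that `⨁ k, R (e k) → M ⧸ N` is surjective with kernel contained
in the radical. -/
theorem exists_idempotent_generators_mod_jacobson {R : Type*} [Ring R] [IsSemiprimaryRing R]
    {V : Type u} [AddCommGroup V] [Module R V] (M N : Submodule R V)
    (hN : Ring.jacobson R • M ≤ N) :
    ∃ (ι : Type u) (e : ι → R) (m : ι → V), (∀ k, IsIdempotentElem (e k)) ∧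
      (∀ k, m k ∈ M) ∧ (∀ k, e k • m k = m k) ∧ (∀ k, m k ≠ 0) ∧
      M ≤ Submodule.span R (Set.range m) ⊔ N ∧
      ∀ (t : Finset ι) (r : ι → R), ∑ k ∈ t, r k • m k ∈ N →
        ∀ k ∈ t, r k * e k ∈ Ring.jacobson R := by
  classical
  let Q := M.map N.mkQ
  have hQ : ∀ r ∈ Ring.jacobson R, ∀ q : Q, r • q = 0 := by
    rintro r hr ⟨_, x, hx, rfl⟩
    exact Subtype.ext ((Submodule.Quotient.mk_eq_zero N).2 (hN (Submodule.smul_mem_smul hr hx)))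
  have := isSemisimpleModule_of_jacobson_smul_eq_zero (Q := ↥Q) hQ
  obtain ⟨s, hind, hsup, hs⟩ := IsSemisimpleModule.exists_sSupIndep_sSup_simples_eq_top R Q
  have key : ∀ S : s, ∃ (e : R) (m : V) (hm : m ∈ M), IsIdempotentElem e ∧ e • m = m ∧ m ≠ 0 ∧
      S.1 = Submodule.span R {⟨N.mkQ m, Submodule.mem_map_of_mem hm⟩} ∧
      ∀ r : R, r • m ∈ N → r * e ∈ Ring.jacobson R := by
    intro S
    have := hs S.1 S.2
    have := IsSimpleModule.nontrivial R S.1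
    obtain ⟨q, hq⟩ := exists_ne (0 : S.1)
    obtain ⟨e, he, heq, h⟩ := exists_idempotent_generator_mod_jacobson hQ q.1
    obtain ⟨x, hx, hxq⟩ := q.1.2
    have hmk : N.mkQ (e • x) = q.1.1 := by
      rw [map_smul, hxq, ← Submodule.coe_smul, heq]
    refine ⟨e, e • x, M.smul_mem _ hx, he, by rw [smul_smul, he.eq],
      fun h0 ↦ hq ?_, ?_, fun r hr ↦ h r ?_⟩
    · rw [h0, map_zero] at hmk
      exact Subtype.ext (Subtype.ext hmk.symm)
    · have htop := IsSimpleModule.span_singleton_eq_top R (M := S.1) hq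
      have hspan := congrArg (Submodule.map S.1.subtype) htop
      rw [Submodule.map_span, Submodule.map_subtype_top, Set.image_singleton] at hspan
      rw [← hspan]
      congr 2
      exact Subtype.ext hmk.symm
    · ext
      rw [Submodule.coe_smul, ← hmk, ← map_smul]
      exact (Submodule.Quotient.mk_eq_zero N).2 hr
  choose e m hm he hem hm0 hspan hr using key
  refine ⟨s, e, m, he, hm, hem, hm0, ?_, fun t r hsum k hk ↦ hr k _ ?_⟩
  · have htop : M.map N.mkQ ≤ (Submodule.span R (Set.range m)).map N.mkQ := by
      have h1 : (⊤ : Submodule R Q) ≤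
          ((Submodule.span R (Set.range m)).map N.mkQ).comap Q.subtype := by
        rw [← hsup]
        refine sSup_le fun S hS ↦ ?_
        rw [show S = _ from hspan ⟨S, hS⟩, Submodule.span_le, Set.singleton_subset_iff]
        exact Submodule.mem_map_of_mem (Submodule.subset_span ⟨⟨S, hS⟩, rfl⟩)
      exact fun x hx ↦ h1 (show (⟨x, hx⟩ : Q) ∈ ⊤ from trivial)
    have := Submodule.comap_mono (f := N.mkQ) htop
    rw [Submodule.comap_map_eq, Submodule.comap_map_eq, Submodule.ker_mkQ] at this
    exact le_sup_left.trans this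
  · let q : s → Q := fun k ↦ ⟨N.mkQ (m k), Submodule.mem_map_of_mem (hm k)⟩
    have h0 := (iSupIndep_iff_finsetSum_eq_zero_imp_eq_zero _).1 ((sSupIndep_iff s).1 hind) t
      (fun k ↦ r k • q k) (fun k _ ↦ ?_) ?_ k hk
    · have h1 := congrArg Subtype.val h0
      exact (Submodule.Quotient.mk_eq_zero N).1 h1
    · rw [hspan k]
      exact Submodule.smul_mem _ _ (Submodule.mem_span_singleton_self _)
    · apply Subtype.ext
      have h2 := (Submodule.Quotient.mk_eq_zero N).2 hsum
      rw [← Submodule.mkQ_apply, map_sum] at h2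
      simpa [q] using h2

theorem Submodule.le_of_le_sup_smul_of_isNilpotent {R V : Type*} [Ring R] [AddCommGroup V]
    [Module R V] {I : Ideal R} [I.IsTwoSided] (hI : IsNilpotent I) {M F : Submodule R V}
    (h : M ≤ F ⊔ I • M) : M ≤ F := by
  obtain ⟨n, hn⟩ := hI
  have key : ∀ n : ℕ, M ≤ F ⊔ I ^ n • M := by
    intro n
    induction n with
    | zero => rw [Submodule.pow_zero, Ideal.one_eq_top, Submodule.top_smul]; exact le_sup_right
    | succ n ih =>
      refine h.trans (sup_le le_sup_left ?_)
      calc I • M ≤ I • (F ⊔ I ^ n • M) := smul_mono_right _ ih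
        _ = I • F ⊔ I ^ (n + 1) • M := by
          rw [Submodule.smul_sup, Ideal.IsTwoSided.pow_succ, Submodule.mul_smul]
        _ ≤ F ⊔ I ^ (n + 1) • M := sup_le_sup_right Submodule.smul_le_right _
  have := key n
  rwa [hn, Submodule.zero_eq_bot, Submodule.bot_smul, sup_bot_eq] at this

section Graded

variable {A : Type u} [Ring A] {𝒜 : ℤ → AddSubgroup A} [GradedRing 𝒜]

theorem mem_gradedRadical_of_mem (hneg : ∀ i : ℤ, i < 0 → 𝒜 i = ⊥) {a : A} {d : ℤ}
    (ha : a ∈ 𝒜 d) (h0 : d = 0 → decompose 𝒜 a 0 ∈ Ring.jacobson ↥(𝒜 0)) :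
    a ∈ gradedRadical A 𝒜 := by
  refine ⟨?_, fun i hi ↦ ?_⟩
  · rw [Ideal.jacobson_bot]
    by_cases hd : d = 0
    · exact h0 hd
    · have : decompose 𝒜 a 0 = 0 := Subtype.ext (decompose_of_mem_ne 𝒜 ha hd)
      rw [this]
      exact zero_mem _
  · have h : (decompose 𝒜 a i : A) ∈ (⊥ : AddSubgroup A) := hneg i hi ▸ (decompose 𝒜 a i).2
    exact Subtype.ext h

variable {ι : Type u} {e : ι → A} (s : ι → ℤ)

theorem freeIdemGrading_coe_decompose (y : ⨁ j, freeIdemGrading A 𝒜 ι e s j) (j : ℤ) (k : ι) :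
    (decompose 𝒜 ((DirectSum.coeAddMonoidHom (freeIdemGrading A 𝒜 ι e s) y) k : A) (j - s k) : A)
      = ((y j : freeIdemModule A ι e) k : A) := by
  classical
  induction y using DirectSum.induction_on with
  | zero => simp
  | of i x =>
    rw [DirectSum.coeAddMonoidHom_of]
    by_cases h : i = j
    · subst h
      rw [decompose_of_mem_same 𝒜 (x.2 k), DirectSum.of_eq_same]
    · rw [decompose_of_mem_ne 𝒜 (x.2 k) (by simpa using h), DirectSum.of_eq_of_ne _ _ _ (Ne.symm h)]
      simp
  | add x y hx hy =>
    simp only [map_add, DirectSum.add_apply, Submodule.coe_add, AddSubgroup.coe_add,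
      decompose_add, hx, hy]

theorem isGradedModule_freeIdemGrading (he : ∀ k, e k ∈ 𝒜 0) :
    IsGradedModule A 𝒜 (freeIdemModule A ι e) (freeIdemGrading A 𝒜 ι e s) := by
  classical
  refine ⟨⟨?_, ?_⟩, ?_⟩
  · rw [injective_iff_map_eq_zero]
    intro y hy
    ext j k
    rw [← freeIdemGrading_coe_decompose, hy]
    simp
  · rw [← AddMonoidHom.mrange_eq_top, eq_top_iff]
    rintro x -
    induction x using DirectSum.induction_on with
    | zero => exact zero_mem _
    | add x y hx hy => exact add_mem hx hy
    | of k y =>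
      obtain ⟨y, hy⟩ := y
      obtain ⟨a, rfl⟩ := Submodule.mem_span_singleton.1 hy
      induction a using DirectSum.Decomposition.inductionOn 𝒜 with
      | zero =>
        refine ⟨0, ?_⟩
        rw [map_zero, ← map_zero (DirectSum.of _ k)]
        congr 1
        exact Subtype.ext (zero_smul _ _).symm
      | add a b ha hb =>
        have h1 := Submodule.smul_mem _ a (Submodule.mem_span_singleton_self (R := A) (e k))
        have h2 := Submodule.smul_mem _ b (Submodule.mem_span_singleton_self (R := A) (e k))
        convert add_mem (ha h1) (hb h2)
        rw [← map_add]
        congr 1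
        exact Subtype.ext (add_smul _ _ _)
      | @homogeneous i a =>
        refine ⟨DirectSum.of _ (i + s k) ⟨DirectSum.of _ k ⟨(a : A) • e k, hy⟩, fun l ↦ ?_⟩, ?_⟩
        · by_cases h : k = l
          · subst h
            rw [DirectSum.of_eq_same]
            have := SetLike.mul_mem_graded a.2 (he k)
            simpa using this
          · rw [DirectSum.of_eq_of_ne _ _ _ (Ne.symm h)]
            exact zero_mem _
        · exact DirectSum.coeAddMonoidHom_of _ _ _
  · intro i j a x ha hx k
    have := SetLike.mul_mem_graded ha (hx k)
    rw [add_sub_assoc]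
    exact this

end Graded

theorem stmt_2 (A : Type u) [Ring A] (𝒜 : ℤ → AddSubgroup A) [GradedRing 𝒜]
    (hneg : ∀ i : ℤ, i < 0 → 𝒜 i = ⊥) (hart : IsArtinianRing ↥(𝒜 0))
    (X : Type u) [AddCommGroup X] [Module A X] (𝒳 : ℤ → AddSubgroup X)
    (hX : IsGradedModule A 𝒜 X 𝒳)
    (hbdd : ∃ n₀ : ℤ, ∀ j : ℤ, j < n₀ → 𝒳 j = ⊥) :
    ∃ (ι : Type u) (e : ι → A) (s : ι → ℤ)
      (f : freeIdemModule A ι e →ₗ[A] X),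
      (∀ k, e k ∈ 𝒜 0 ∧ IsIdempotentElem (e k)) ∧
      IsGradedModule A 𝒜 (freeIdemModule A ι e) (freeIdemGrading A 𝒜 ι e s) ∧
      Function.Surjective f ∧
      (∀ (j : ℤ) (x : freeIdemModule A ι e),
        x ∈ freeIdemGrading A 𝒜 ι e s j → f x ∈ 𝒳 j) ∧
      (LinearMap.ker f ≤ Submodule.span A
        {y : freeIdemModule A ι e | ∃ a ∈ gradedRadical A 𝒜,
          ∃ p : freeIdemModule A ι e, y = a • p}) ∧
      (∃ m : ℤ, ∀ j : ℤ, j < m →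
        ∀ x ∈ LinearMap.ker f, x ∈ freeIdemGrading A 𝒜 ι e s j → x = 0) := by
  classical
  obtain ⟨n₀, hn₀⟩ := hbdd
  let _ : Module ↥(𝒜 0) X := Module.compHom X (SetLike.GradeZero.subring 𝒜).subtype
  have hsm : ∀ (r : ↥(𝒜 0)) (x : X), r • x = (r : A) • x := fun _ _ ↦ rfl
  let M : ℤ → Submodule ↥(𝒜 0) X := fun j ↦
    { 𝒳 j with
      smul_mem' := fun r x hx ↦ by
        have := hX.2 0 j r x r.2 hx
        rwa [zero_add] at this }
  let T : ℤ → Set X := fun j ↦ {z | ∃ i : ℤ, 0 < i ∧ ∃ a ∈ 𝒜 i, ∃ y ∈ 𝒳 (j - i), z = a • y}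
  let N : ℤ → Submodule ↥(𝒜 0) X := fun j ↦
    Ring.jacobson ↥(𝒜 0) • M j ⊔ Submodule.span ↥(𝒜 0) (T j)
  choose ι' e' m' he hm hem hm0 hspan hcov using
    fun j ↦ exists_idempotent_generators_mod_jacobson (M j) (N j) le_sup_left
  let ι := Σ j, ι' j
  let e : ι → A := fun k ↦ (e' k.1 k.2 : A)
  let s : ι → ℤ := Sigma.fst
  let m : ι → X := fun k ↦ m' k.1 k.2
  have he0 : ∀ k, e k ∈ 𝒜 0 := fun k ↦ (e' k.1 k.2).2
  have hee : ∀ k, e k * e k = e k := fun k ↦ congrArg Subtype.val (he k.1 k.2).eq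
  have hemk : ∀ k, e k • m k = m k := fun k ↦ hem k.1 k.2
  have hmk : ∀ k, m k ∈ 𝒳 (s k) := fun k ↦ hm k.1 k.2
  let f : freeIdemModule A ι e →ₗ[A] X := DirectSum.toModule A ι X fun k ↦
    LinearMap.toSpanSingleton A X (m k) ∘ₗ (Submodule.span A {e k}).subtype
  have hf_of : ∀ k y, f (DirectSum.of _ k y) = (y : A) • m k := fun k y ↦ by
    rw [← DirectSum.lof_eq_of A]
    exact DirectSum.toModule_lof A (M := fun k ↦ ↥(Submodule.span A {e k})) k y
  have hf : ∀ x : freeIdemModule A ι e, f x = ∑ k ∈ DFinsupp.support x, (x k : A) • m k := by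
    intro x
    conv_lhs => rw [← DirectSum.sum_support_of x]
    rw [map_sum]
    exact Finset.sum_congr rfl fun k _ ↦ hf_of k _
  have hxe : ∀ (x : freeIdemModule A ι e) k, (x k : A) * e k = x k := by
    intro x k
    obtain ⟨a, ha⟩ := Submodule.mem_span_singleton.1 (x k).2
    rw [← ha, smul_eq_mul, mul_assoc, hee]
  have hdeg : ∀ (j : ℤ) (x : freeIdemModule A ι e),
      x ∈ freeIdemGrading A 𝒜 ι e s j → f x ∈ 𝒳 j := by
    intro j x hx
    rw [hf]
    refine sum_mem fun k _ ↦ ?_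
    have := hX.2 _ _ _ _ (hx k) (hmk k)
    rwa [sub_add_cancel] at this
  have hgr := isGradedModule_freeIdemGrading (𝒜 := 𝒜) s he0
  have hnil : IsNilpotent (Ring.jacobson ↥(𝒜 0)) := IsSemiprimaryRing.isNilpotent
  let _ := hX.1.chooseDecomposition
  have hsurj : Function.Surjective f := by
    let F : Submodule ↥(𝒜 0) X :=
      { f.range.toAddSubgroup with smul_mem' := fun r x hx ↦ f.range.smul_mem (r : A) hx }
    have hmF : ∀ k, m k ∈ F := fun k ↦
      ⟨DirectSum.of _ k ⟨e k, Submodule.mem_span_singleton_self _⟩, by rw [hf_of]; exact hemk k⟩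
    have key : ∀ (n : ℕ) (j : ℤ), j < n₀ + n → M j ≤ F := by
      intro n
      induction n with
      | zero =>
        intro j hj x hx
        have hx' : x ∈ 𝒳 j := hx
        rw [hn₀ j (by simpa using hj)] at hx'
        rw [(AddSubgroup.mem_bot.1 hx' : x = 0)]
        exact zero_mem _
      | succ n ih =>
        intro j hj
        refine Submodule.le_of_le_sup_smul_of_isNilpotent hnil
          ((hspan j).trans (sup_le ?_ (sup_le le_sup_right ?_)))
        · refine le_sup_of_le_left (Submodule.span_le.2 ?_)
          rintro _ ⟨k, rfl⟩
          exact hmF ⟨j, k⟩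
        · refine le_sup_of_le_left (Submodule.span_le.2 ?_)
          rintro _ ⟨i, hi, a, -, y, hy, rfl⟩
          exact f.range.smul_mem a (ih (j - i) (by push_cast at hj; omega) hy)
    intro x
    change x ∈ f.range
    rw [← DirectSum.sum_support_decompose 𝒳 x]
    refine sum_mem fun j _ ↦ ?_
    exact key (j - n₀ + 1).toNat j (by omega) (decompose 𝒳 x j).2
  have hker : ∀ (j : ℤ) (x : freeIdemModule A ι e), x ∈ freeIdemGrading A 𝒜 ι e s j →
      f x = 0 → ∀ k, (x k : A) ∈ gradedRadical A 𝒜 := by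
    intro j x hx hfx k
    refine mem_gradedRadical_of_mem hneg (hx k) fun hk ↦ ?_
    obtain ⟨i, k⟩ := k
    obtain rfl : j = i := sub_eq_zero.1 hk
    by_cases hk0 : x ⟨j, k⟩ = 0
    · rw [hk0]
      simp
    let r : ι' j → ↥(𝒜 0) := fun l ↦ decompose 𝒜 (x ⟨j, l⟩ : A) 0
    have hr : ∀ l, (r l : A) = x ⟨j, l⟩ := fun l ↦ decompose_of_mem_same 𝒜 (by
      have := hx ⟨j, l⟩
      rwa [show j - s ⟨j, l⟩ = 0 from sub_self j] at this)
    have hinj : Function.Injective (Sigma.mk j : ι' j → ι) := sigma_mk_injective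
    let t := (DFinsupp.support x).preimage (Sigma.mk j : ι' j → ι) hinj.injOn
    have hre : r k * e' j k = r k := Subtype.ext (by
      change (r k : A) * e ⟨j, k⟩ = r k
      rw [hr, hxe])
    have hrad := hcov j t r ?_ k (by
      rw [Finset.mem_preimage, DFinsupp.mem_support_iff]
      exact hk0)
    · rwa [hre] at hrad
    let g : ι → X := fun k ↦ if k.1 = j then (x k : A) • m k else 0
    have h1 : ∑ l ∈ t, r l • m' j l = ∑ k ∈ DFinsupp.support x, g k := by
      rw [← Finset.sum_preimage (Sigma.mk j : ι' j → ι) (DFinsupp.support x) hinj.injOn g]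
      · refine Finset.sum_congr rfl fun l _ ↦ ?_
        simp only [g, if_true, hsm, hr, m]
      · rintro ⟨i, l⟩ - hl
        refine if_neg ?_
        rintro rfl
        exact hl ⟨l, rfl⟩
    have h2 : ∑ k ∈ DFinsupp.support x, g k =
        - ∑ k ∈ DFinsupp.support x, ((x k : A) • m k - g k) := by
      rw [Finset.sum_sub_distrib, ← hf, hfx, zero_sub, neg_neg]
    rw [h1, h2]
    refine neg_mem (sum_mem fun k _ ↦ ?_)
    by_cases hkj : k.1 = j
    · simp only [g, if_pos hkj, sub_self]
      exact zero_mem _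
    · simp only [g, if_neg hkj, sub_zero]
      rcases lt_or_gt_of_ne hkj with h | h
      · refine Submodule.mem_sup_right (Submodule.subset_span
          ⟨j - s k, sub_pos.2 h, x k, hx k, m k, ?_, rfl⟩)
        rw [sub_sub_cancel]
        exact hmk k
      · have h0 := hx k
        rw [hneg _ (sub_neg.2 h)] at h0
        rw [(AddSubgroup.mem_bot.1 h0 : (x k : A) = 0), zero_smul]
        exact zero_mem _
  refine ⟨ι, e, s, f, fun k ↦ ⟨he0 k, hee k⟩, hgr, hsurj, hdeg, ?_, n₀, ?_⟩
  · intro x hx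
    obtain ⟨y, rfl⟩ := hgr.1.2 x
    have hcomp : ∀ (y : ⨁ j, freeIdemGrading A 𝒜 ι e s j) (j : ℤ),
        (decompose 𝒳 (f (DirectSum.coeAddMonoidHom (freeIdemGrading A 𝒜 ι e s) y)) j : X)
          = f (y j) := by
      intro y j
      induction y using DirectSum.induction_on with
      | zero => simp
      | of i x =>
        rw [DirectSum.coeAddMonoidHom_of]
        by_cases h : i = j
        · subst h
          rw [decompose_of_mem_same 𝒳 (hdeg _ _ x.2), DirectSum.of_eq_same]
        · rw [decompose_of_mem_ne 𝒳 (hdeg _ _ x.2) h, DirectSum.of_eq_of_ne _ _ _ (Ne.symm h)]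
          simp
      | add x y hx hy =>
        simp only [map_add, DirectSum.add_apply, AddSubgroup.coe_add, decompose_add, hx, hy]
    rw [← DirectSum.sum_support_of y, map_sum]
    refine sum_mem fun j _ ↦ ?_
    rw [DirectSum.coeAddMonoidHom_of]
    have hfy : f (y j) = 0 := by
      rw [← hcomp, LinearMap.mem_ker.1 hx]
      simp
    rw [← DirectSum.sum_support_of (y j : freeIdemModule A ι e)]
    refine sum_mem fun k _ ↦ Submodule.subset_span
      ⟨_, hker j _ (y j).2 hfy k,
        DirectSum.of _ k ⟨e k, Submodule.mem_span_singleton_self _⟩, ?_⟩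
    rw [← DirectSum.lof_eq_of A, ← DirectSum.lof_eq_of A, ← map_smul]
    congr 1
    exact Subtype.ext (hxe _ k).symm
  · intro j hj x _ hx
    ext k
    have hk : n₀ ≤ s k := by
      by_contra! h
      have h0 := hmk k
      rw [hn₀ _ h] at h0
      exact hm0 k.1 k.2 h0
    have h0 := hx k
    rw [hneg _ (by omega)] at h0
    exact h0
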